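/- Let (X,d) be a compact metric space, let {S_1,...,S_N} be an IFS of contracting similarities on X with similarity dimension s, let C ⊆ X be a nonempty compact set, and let F_C be the inhomogeneous attractor with condensation C. Then for all t > max{s, lb-dim C}, lb-dim F_C ≤ max{t, s + p_t(C)·t}. -/

import Mathlib

open Set Filter Topology Metric MeasureTheory

/-- Minimum number of sets of diameter at most `δ` needed to cover `F`. -/
noncomputable def coverN {X : Type*} [MetricSpace X] (F : Set X) (δ : ℝ) : ℕ :=
  sInf {n : ℕ | ∃ U : Fin n → Set X, (∀ i, EMetric.diam (U i) ≤ ENNReal.ofReal δ) ∧ F ⊆ ⋃ i, U i}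

/-- Lower box dimension. -/
noncomputable def lbDim {X : Type*} [MetricSpace X] (F : Set X) : ℝ :=
  Filter.liminf (fun δ : ℝ => Real.log (coverN F δ) / (-Real.log δ)) (𝓝[>] 0)

/-- Upper box dimension. -/
noncomputable def ubDim {X : Type*} [MetricSpace X] (F : Set X) : ℝ :=
  Filter.limsup (fun δ : ℝ => Real.log (coverN F δ) / (-Real.log δ)) (𝓝[>] 0)

/-- The `(t,δ)`-covering regularity exponent `p_{t,δ}(C)`. -/
noncomputable def cre {X : Type*} [MetricSpace X] (C : Set X) (t δ : ℝ) : ℝ :=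
  sSup {p : ℝ | 0 ≤ p ∧ p ≤ 1 ∧ δ ^ (-(p * t)) ≤ (coverN C (δ ^ p) : ℝ)}

/-- The `t`-covering regularity exponent `p_t(C)`. -/
noncomputable def creT {X : Type*} [MetricSpace X] (C : Set X) (t : ℝ) : ℝ :=
  Filter.liminf (fun δ : ℝ => cre C t δ) (𝓝[>] 0)

/-!
Covering `F = ⋃ S_i(F) ∪ C` piece by piece gives `N_x(F) ≤ ∑ N_{x/r_i}(F) + N_x(C)`. For
`q > p_t(C)` there are arbitrarily small `δ` with `N_x(C) ≤ x^{-t} + δ^{-qt}` for all `x ≥ δ`: if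
`q ≤ 1`, scales `x ≥ δ^q` are controlled by monotonicity and scales `x < δ^q` by the definition of
`p_{t,δ}(C)`; if `q ≥ 1`, use `N_x(C) ≤ N_δ(C) ≤ δ^{-t}`, valid for arbitrarily small `δ` since `t`
exceeds the lower box dimension of `C`. For `s < σ ≤ t` the sum `∑ r_i^σ` is less than `1`, so a
large multiple of `x^{-t} + δ^{-qt} x^{-σ}` is a supersolution of the recursion on `[δ, 1)` and
dominates `N_x(F)` there. At `x = δ` this is a bound of order `δ^{-max(t, σ + qt)}`; finally let
`σ → s` and `q → p_t(C)`.
-/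

open scoped NNReal

section Covering

variable {X : Type*} [MetricSpace X] {F G : Set X} {δ : ℝ}

lemma coverN_le_card {ι : Type*} [Fintype ι] {U : ι → Set X}
    (hU : ∀ i, ediam (U i) ≤ ENNReal.ofReal δ) (hF : F ⊆ ⋃ i, U i) :
    coverN F δ ≤ Fintype.card ι := by
  let e := Fintype.equivFin ι
  exact Nat.sInf_le ⟨U ∘ e.symm, fun k ↦ hU _, hF.trans_eq (e.symm.surjective.iUnion_comp U).symm⟩

lemma exists_cover_card_eq_coverN (hF : TotallyBounded F) (hδ : 0 < δ) :
    ∃ U : Fin (coverN F δ) → Set X, (∀ i, ediam (U i) ≤ ENNReal.ofReal δ) ∧ F ⊆ ⋃ i, U i := by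
  obtain ⟨T, hT, hFT⟩ := EMetric.totallyBounded_iff.1 hF (ENNReal.ofReal δ / 2)
    (ENNReal.half_pos (ENNReal.ofReal_pos.2 hδ).ne')
  obtain ⟨n, c, -, rfl⟩ := hT.fin_param
  rw [biUnion_range] at hFT
  have hdiam (i) : ediam (eball (c i) (ENNReal.ofReal δ / 2)) ≤ ENNReal.ofReal δ :=
    ediam_eball_le.trans_eq (ENNReal.mul_div_cancel two_ne_zero ENNReal.ofNat_ne_top)
  exact Nat.sInf_mem
    (s := {n | ∃ U : Fin n → Set X, (∀ i, ediam (U i) ≤ ENNReal.ofReal δ) ∧ F ⊆ ⋃ i, U i})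
    ⟨n, _, hdiam, hFT⟩

lemma coverN_le_coverN (hG : TotallyBounded G) (hFG : F ⊆ G) (hδ : 0 < δ) {δ' : ℝ}
    (hδδ' : δ ≤ δ') : coverN F δ' ≤ coverN G δ := by
  obtain ⟨U, hU, hGU⟩ := exists_cover_card_eq_coverN hG hδ
  simpa using coverN_le_card (fun i ↦ (hU i).trans (ENNReal.ofReal_le_ofReal hδδ'))
    (hFG.trans hGU)

lemma coverN_union_le (hF : TotallyBounded F) (hG : TotallyBounded G) (hδ : 0 < δ) :
    coverN (F ∪ G) δ ≤ coverN F δ + coverN G δ := by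
  obtain ⟨U, hU, hFU⟩ := exists_cover_card_eq_coverN hF hδ
  obtain ⟨V, hV, hGV⟩ := exists_cover_card_eq_coverN hG hδ
  have hUV : F ∪ G ⊆ ⋃ k, Sum.elim U V k := by
    simpa only [iUnion_sum, Sum.elim_inl, Sum.elim_inr] using union_subset_union hFU hGV
  simpa using coverN_le_card (Sum.forall.2 ⟨hU, hV⟩) hUV

lemma coverN_iUnion_le {ι : Type*} [Fintype ι] {F : ι → Set X} (hF : ∀ i, TotallyBounded (F i))
    (hδ : 0 < δ) : coverN (⋃ i, F i) δ ≤ ∑ i, coverN (F i) δ := by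
  choose U hU hFU using fun i ↦ exists_cover_card_eq_coverN (hF i) hδ
  have hUF : ⋃ i, F i ⊆ ⋃ k : Σ i, Fin (coverN (F i) δ), U k.1 k.2 := by
    simpa only [iUnion_sigma] using iUnion_mono hFU
  simpa using coverN_le_card (fun k : Σ i, Fin (coverN (F i) δ) ↦ hU k.1 k.2) hUF

lemma coverN_image_le {Y : Type*} [MetricSpace Y] {f : X → Y} {K : ℝ≥0}
    (hf : LipschitzOnWith K f F) (hF : TotallyBounded F) (hδ : 0 < δ) :
    coverN (f '' F) (K * δ) ≤ coverN F δ := by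
  obtain ⟨U, hU, hFU⟩ := exists_cover_card_eq_coverN hF hδ
  have hdiam (i) : ediam (f '' (F ∩ U i)) ≤ ENNReal.ofReal (K * δ) := by
    rw [ENNReal.ofReal_mul K.coe_nonneg, ENNReal.ofReal_coe_nnreal]
    exact ediam_image_le_iff.2 fun x hx y hy ↦ hf.edist_le_mul_of_le hx.1 hy.1
      ((edist_le_ediam_of_mem hx.2 hy.2).trans (hU i))
  have hcover : f '' F ⊆ ⋃ i, f '' (F ∩ U i) := by
    rw [← image_iUnion, ← inter_iUnion, inter_eq_left.2 hFU]
  simpa using coverN_le_card hdiam hcover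

lemma coverN_inhomogeneous_attractor_le {ι : Type*} [Fintype ι] {S : ι → X → X} {r : ι → ℝ≥0}
    (hr : ∀ i, 0 < r i) {C : Set X} (hS : ∀ i, LipschitzOnWith (r i) (S i) F)
    (hF : TotallyBounded F) (hFC : F = (⋃ i, S i '' F) ∪ C) (hδ : 0 < δ) :
    coverN F δ ≤ ∑ i, coverN F (δ / r i) + coverN C δ := by
  have hSF : (⋃ i, S i '' F) ⊆ F := subset_union_left.trans_eq hFC.symm
  have hCF : C ⊆ F := subset_union_right.trans_eq hFC.symm
  have himage (i) : coverN (S i '' F) δ ≤ coverN F (δ / r i) := by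
    have hri : (0 : ℝ) < r i := hr i
    simpa only [mul_div_cancel₀ δ hri.ne'] using coverN_image_le (hS i) hF (div_pos hδ hri)
  calc coverN F δ = coverN ((⋃ i, S i '' F) ∪ C) δ := by rw [← hFC]
    _ ≤ coverN (⋃ i, S i '' F) δ + coverN C δ :=
      coverN_union_le (hF.subset hSF) (hF.subset hCF) hδ
    _ ≤ ∑ i, coverN (S i '' F) δ + coverN C δ := by
      gcongr
      exact coverN_iUnion_le (fun i ↦ hF.subset ((subset_iUnion _ i).trans hSF)) hδ
    _ ≤ ∑ i, coverN F (δ / r i) + coverN C δ := by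
      gcongr with i
      exact himage i

end Covering

section BoxDimension

variable {X : Type*} [MetricSpace X] {C F : Set X} {δ : ℝ}

/-- The quotient `log N_δ(F) / (-log δ)` whose lower limit as `δ → 0` is the lower box dimension. -/
noncomputable def boxRatio (F : Set X) (δ : ℝ) : ℝ :=
  Real.log (coverN F δ) / (-Real.log δ)

lemma boxRatio_nonneg (F : Set X) (hδ : δ ∈ Ioo 0 1) : 0 ≤ boxRatio F δ :=
  div_nonneg (Real.log_natCast_nonneg _) (neg_nonneg.2 (Real.log_neg hδ.1 hδ.2).le)

lemma boxRatio_le_iff (hδ : δ ∈ Ioo 0 1) {m : ℝ} (hm : 0 ≤ m) :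
    boxRatio F δ ≤ m ↔ (coverN F δ : ℝ) ≤ δ ^ (-m) := by
  have hlog : 0 < -Real.log δ := neg_pos.2 (Real.log_neg hδ.1 hδ.2)
  rcases (coverN F δ).eq_zero_or_pos with h0 | hpos
  · simp [boxRatio, h0, hm, Real.rpow_nonneg hδ.1.le]
  · rw [boxRatio, div_le_iff₀ hlog, Real.le_rpow_iff_log_le (Nat.cast_pos.2 hpos) hδ.1, neg_mul,
      mul_neg]

lemma boxRatio_mono (hF : TotallyBounded F) (hCF : C ⊆ F) (hδ : δ ∈ Ioo 0 1) :
    boxRatio C δ ≤ boxRatio F δ := by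
  refine (boxRatio_le_iff hδ (boxRatio_nonneg F hδ)).2 ?_
  calc (coverN C δ : ℝ) ≤ coverN F δ := mod_cast coverN_le_coverN hF hCF hδ.1 le_rfl
    _ ≤ δ ^ (-boxRatio F δ) := (boxRatio_le_iff hδ (boxRatio_nonneg F hδ)).1 le_rfl

lemma lbDim_le_of_frequently_coverN_le {L E : ℝ} (hE : 0 ≤ E)
    (h : ∃ᶠ δ in 𝓝[>] 0, (coverN F δ : ℝ) ≤ L * δ ^ (-E)) : lbDim F ≤ E := by
  refine le_of_forall_gt_imp_ge_of_dense fun m hm ↦ ?_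
  have hunit : ∀ᶠ δ : ℝ in 𝓝[>] 0, δ ∈ Ioo 0 1 := Ioo_mem_nhdsGT one_pos
  have hlarge : ∀ᶠ δ : ℝ in 𝓝[>] 0, L ≤ δ ^ (E - m) :=
    (tendsto_rpow_neg_nhdsGT_zero (sub_neg.2 hm)).eventually_ge_atTop L
  refine liminf_le_of_frequently_le ?_
    (isBoundedUnder_of_eventually_ge (hunit.mono fun δ ↦ boxRatio_nonneg F))
  refine (h.and_eventually (hunit.and hlarge)).mono ?_
  rintro δ ⟨hcover, hδ, hL⟩
  refine (boxRatio_le_iff hδ (hE.trans hm.le)).2 ?_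
  calc (coverN F δ : ℝ) ≤ L * δ ^ (-E) := hcover
    _ ≤ δ ^ (E - m) * δ ^ (-E) := by gcongr; exact Real.rpow_nonneg hδ.1.le _
    _ = δ ^ (-m) := by rw [← Real.rpow_add hδ.1]; congr 1; ring

/- The second alternative is the junk value of `liminf` in `ℝ`: if the ratio of `C` tends to
infinity then `lbDim C = 0` says nothing about `C`, but the ratio of `F` tends to infinity too. -/
lemma frequently_boxRatio_lt_or_lbDim_eq_zero (hF : TotallyBounded F) (hCF : C ⊆ F) {t : ℝ}
    (ht : lbDim C < t) : (∃ᶠ δ in 𝓝[>] 0, boxRatio C δ < t) ∨ lbDim F = 0 := by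
  by_cases hC : (𝓝[>] (0 : ℝ)).IsCoboundedUnder (· ≥ ·) (boxRatio C)
  · exact .inl (frequently_lt_of_liminf_lt hC ht)
  · have hF_unbounded : ¬ BddAbove {a | ∀ᶠ δ in 𝓝[>] (0 : ℝ), a ≤ boxRatio F δ} := by
      refine fun ⟨b, hb⟩ ↦ hC ⟨b, fun a ha ↦ hb ?_⟩
      filter_upwards [eventually_map.1 ha, Ioo_mem_nhdsGT one_pos] with δ haδ hδ
      exact haδ.trans (boxRatio_mono hF hCF hδ)
    exact .inr (by rw [← Real.sSup_of_not_bddAbove hF_unbounded, ← liminf_eq]; rfl)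

end BoxDimension

section CoveringRegularity

variable {X : Type*} [MetricSpace X] {C : Set X} {t q δ x : ℝ}

lemma cre_nonneg (C : Set X) (t δ : ℝ) : 0 ≤ cre C t δ :=
  Real.sSup_nonneg fun _ hp ↦ hp.1

lemma cre_le_one (C : Set X) (t δ : ℝ) : cre C t δ ≤ 1 :=
  Real.sSup_le (fun _ hp ↦ hp.2.1) zero_le_one

lemma isCoboundedUnder_cre (C : Set X) (t : ℝ) :
    (𝓝[>] (0 : ℝ)).IsCoboundedUnder (· ≥ ·) (cre C t) :=
  isCoboundedUnder_ge_of_le _ (cre_le_one C t)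

lemma creT_nonneg (C : Set X) (t : ℝ) : 0 ≤ creT C t :=
  le_liminf_of_le (isCoboundedUnder_cre C t) (.of_forall (cre_nonneg C t))

lemma coverN_rpow_lt_of_cre_lt {p : ℝ} (hp : cre C t δ < p) (hp1 : p ≤ 1) :
    (coverN C (δ ^ p) : ℝ) < δ ^ (-(p * t)) := by
  by_contra! h
  exact hp.not_ge (le_csSup ⟨1, fun _ hp' ↦ hp'.2.1⟩ ⟨(cre_nonneg C t δ).trans hp.le, hp1, h⟩)

/- Write `x = δ ^ p`. If `q ≤ p` then `p` fails the inequality defining `cre`; if `p < q` then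
`δ ^ q ≤ x` and `q` fails it. -/
lemma coverN_le_of_cre_lt (hC : TotallyBounded C) (hδ : δ ∈ Ioo 0 1) (hcre : cre C t δ < q)
    (hq : q ≤ 1) (hx : δ ≤ x) : (coverN C x : ℝ) ≤ x ^ (-t) + δ ^ (-(q * t)) := by
  have hx0 : 0 < x := hδ.1.trans_le hx
  obtain ⟨p, rfl⟩ : ∃ p, δ ^ p = x := ⟨_, Real.rpow_logb hδ.1 hδ.2.ne hx0⟩
  rcases le_or_gt q p with hqp | hpq
  · have hp1 : p ≤ 1 := by
      rwa [← Real.rpow_le_rpow_left_iff_of_base_lt_one hδ.1 hδ.2, Real.rpow_one]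
    calc (coverN C (δ ^ p) : ℝ) ≤ δ ^ (-(p * t)) :=
          (coverN_rpow_lt_of_cre_lt (hcre.trans_le hqp) hp1).le
      _ = (δ ^ p) ^ (-t) := by rw [← Real.rpow_mul hδ.1.le, mul_neg]
      _ ≤ _ := le_add_of_nonneg_right (Real.rpow_nonneg hδ.1.le _)
  · calc (coverN C (δ ^ p) : ℝ) ≤ coverN C (δ ^ q) := mod_cast
          coverN_le_coverN hC subset_rfl (Real.rpow_pos_of_pos hδ.1 _)
            (Real.rpow_le_rpow_of_exponent_ge hδ.1 hδ.2.le hpq.le)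
      _ ≤ δ ^ (-(q * t)) := (coverN_rpow_lt_of_cre_lt hcre hq).le
      _ ≤ _ := le_add_of_nonneg_left (Real.rpow_nonneg hx0.le _)

lemma coverN_le_of_boxRatio_lt (hC : TotallyBounded C) (hδ : δ ∈ Ioo 0 1) (ht : 0 ≤ t)
    (hbox : boxRatio C δ < t) (hq : 1 ≤ q) (hx : δ ≤ x) :
    (coverN C x : ℝ) ≤ x ^ (-t) + δ ^ (-(q * t)) :=
  calc (coverN C x : ℝ) ≤ coverN C δ := mod_cast coverN_le_coverN hC subset_rfl hδ.1 hx
    _ ≤ δ ^ (-t) := (boxRatio_le_iff hδ ht).1 hbox.le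
    _ ≤ δ ^ (-(q * t)) := Real.rpow_le_rpow_of_exponent_ge hδ.1 hδ.2.le
      (neg_le_neg (le_mul_of_one_le_left ht hq))
    _ ≤ _ := le_add_of_nonneg_left (Real.rpow_nonneg (hδ.1.le.trans hx) _)

lemma frequently_coverN_le_of_creT_lt (hC : TotallyBounded C) (ht : 0 ≤ t)
    (hbox : ∃ᶠ δ in 𝓝[>] 0, boxRatio C δ < t) (hq : creT C t < q) :
    ∃ᶠ δ in 𝓝[>] 0, ∀ x, δ ≤ x → (coverN C x : ℝ) ≤ x ^ (-t) + δ ^ (-(q * t)) := by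
  have hunit : ∀ᶠ δ : ℝ in 𝓝[>] 0, δ ∈ Ioo 0 1 := Ioo_mem_nhdsGT one_pos
  rcases le_total q 1 with hq1 | hq1
  · have hcre : ∃ᶠ δ in 𝓝[>] 0, cre C t δ < q :=
      frequently_lt_of_liminf_lt (isCoboundedUnder_cre C t) hq
    exact (hcre.and_eventually hunit).mono fun δ ⟨h, hδ⟩ _ ↦ coverN_le_of_cre_lt hC hδ h hq1
  · exact (hbox.and_eventually hunit).mono
      fun δ ⟨h, hδ⟩ _ ↦ coverN_le_of_boxRatio_lt hC hδ ht h hq1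

end CoveringRegularity

section ScalingRecursion

variable {ι : Type*} [Fintype ι] {r : ι → ℝ}

lemma similarityDimension_nonneg (hr : ∀ i, r i ∈ Ioo 0 1) {s : ℝ} (hs : ∑ i, r i ^ s = 1) :
    0 ≤ s := by
  by_contra! hneg
  have hone (i) : 1 < r i ^ s :=
    Real.one_lt_rpow_of_pos_of_lt_one_of_neg (hr i).1 (hr i).2 hneg
  obtain ⟨i, -, -⟩ := Finset.exists_ne_zero_of_sum_ne_zero (hs.trans_ne one_ne_zero)
  have hle : r i ^ s ≤ ∑ j, r j ^ s :=
    Finset.single_le_sum (fun j _ ↦ zero_le_one.trans (hone j).le) (Finset.mem_univ i)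
  exact (hone i).not_ge (hle.trans_eq hs)

lemma sum_rpow_lt_one_of_similarityDimension_lt (hr : ∀ i, r i ∈ Ioo 0 1) {s σ : ℝ}
    (hs : ∑ i, r i ^ s = 1) (hσ : s < σ) : ∑ i, r i ^ σ < 1 := by
  have hne : (Finset.univ : Finset ι).Nonempty :=
    Finset.nonempty_of_sum_ne_zero (hs.trans_ne one_ne_zero)
  rw [← hs]
  exact Finset.sum_lt_sum_of_nonempty hne
    fun i _ ↦ Real.rpow_lt_rpow_of_exponent_gt (hr i).1 (hr i).2 hσ

lemma le_of_scaling_subsolution_of_supersolution (hr : ∀ i, r i ∈ Ioo 0 1) {g G h : ℝ → ℝ} {δ : ℝ}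
    (hδ : 0 < δ) (hg : ∀ x ∈ Ico δ 1, g x ≤ ∑ i, g (x / r i) + h x)
    (hG : ∀ x ∈ Ico δ 1, ∑ i, G (x / r i) + h x ≤ G x)
    (hgG : ∀ i, ∀ x ∈ Ico 1 (r i)⁻¹, g x ≤ G x) : ∀ x ∈ Ico δ 1, g x ≤ G x := by
  have : Nonempty (Ioo (0 : ℝ) 1) := (nonempty_Ioo.2 one_pos).to_subtype
  obtain ⟨⟨R, hR0, hR1⟩, hR⟩ := Finite.exists_le fun i ↦ (⟨r i, hr i⟩ : Ioo (0 : ℝ) 1)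
  have hind (n : ℕ) : ∀ x ∈ Ico δ 1, R ^ n ≤ x → g x ≤ G x := by
    induction n with
    | zero => exact fun x hx hn ↦ absurd hx.2 (by simpa using hn)
    | succ n ih =>
      intro x hx hn
      have hx0 : 0 < x := hδ.trans_le hx.1
      have hstep (i) : g (x / r i) ≤ G (x / r i) := by
        obtain ⟨hri0, hri1⟩ := hr i
        rcases lt_or_ge (x / r i) 1 with hlt | hge
        · refine ih _ ⟨hx.1.trans (le_div_self hx0.le hri0 hri1.le), hlt⟩ ?_
          calc R ^ n = R ^ (n + 1) / R := by rw [pow_succ, mul_div_cancel_right₀ _ hR0.ne']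
            _ ≤ x / r i := div_le_div₀ hx0.le hn hri0 (hR i)
        · exact hgG i _ ⟨hge, by simpa using div_lt_div_of_pos_right hx.2 hri0⟩
      calc g x ≤ ∑ i, g (x / r i) + h x := hg x hx
        _ ≤ ∑ i, G (x / r i) + h x := by gcongr with i; exact hstep i
        _ ≤ G x := hG x hx
  intro x hx
  obtain ⟨n, hn⟩ := exists_pow_lt_of_lt_one (hδ.trans_le hx.1) hR1
  exact hind n x hx hn.le

lemma sum_div_rpow_neg (hr : ∀ i, 0 ≤ r i) {x : ℝ} (hx : 0 ≤ x) (u : ℝ) :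
    ∑ i, (x / r i) ^ (-u) = (∑ i, r i ^ u) * x ^ (-u) := by
  simp_rw [Real.div_rpow hx (hr _), Real.rpow_neg (hr _), div_inv_eq_mul, Finset.sum_mul,
    mul_comm]

lemma power_supersolution (hr : ∀ i, r i ∈ Ioo 0 1) {σ t D L x : ℝ} (hσ : 0 ≤ σ) (hσt : σ ≤ t)
    (hD : 0 ≤ D) (hL0 : 0 ≤ L) (hL : 1 ≤ L * (1 - ∑ i, r i ^ σ)) (hx : x ∈ Ioo 0 1) :
    ∑ i, L * ((x / r i) ^ (-t) + D * (x / r i) ^ (-σ)) + (x ^ (-t) + D) ≤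
      L * (x ^ (-t) + D * x ^ (-σ)) := by
  have hr0 (i) : 0 ≤ r i := (hr i).1.le
  have hsum : ∑ i, r i ^ t ≤ ∑ i, r i ^ σ := Finset.sum_le_sum fun i _ ↦
    Real.rpow_le_rpow_of_exponent_ge (hr i).1 (hr i).2.le hσt
  have hxt : 0 ≤ x ^ (-t) := Real.rpow_nonneg hx.1.le _
  have hxσ : 1 ≤ x ^ (-σ) :=
    Real.one_le_rpow_of_pos_of_le_one_of_nonpos hx.1 hx.2.le (neg_nonpos.2 hσ)
  calc ∑ i, L * ((x / r i) ^ (-t) + D * (x / r i) ^ (-σ)) + (x ^ (-t) + D)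
      = L * ((∑ i, r i ^ t) * x ^ (-t) + D * ((∑ i, r i ^ σ) * x ^ (-σ))) + (x ^ (-t) + D) := by
        rw [← Finset.mul_sum, Finset.sum_add_distrib, ← Finset.mul_sum,
          sum_div_rpow_neg hr0 hx.1.le, sum_div_rpow_neg hr0 hx.1.le]
    _ ≤ L * ((∑ i, r i ^ σ) * x ^ (-t) + D * ((∑ i, r i ^ σ) * x ^ (-σ))) +
          (x ^ (-t) + D * x ^ (-σ)) := by
        gcongr
        exact le_mul_of_one_le_right hD hxσ
    _ = (L * (∑ i, r i ^ σ) + 1) * (x ^ (-t) + D * x ^ (-σ)) := by ring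
    _ ≤ L * (x ^ (-t) + D * x ^ (-σ)) := by gcongr; linarith

lemma exists_bound_of_scaling_recursion (hr : ∀ i, r i ∈ Ioo 0 1) {σ t K : ℝ} (hσ : 0 ≤ σ)
    (hσt : σ ≤ t) (hsum : ∑ i, r i ^ σ < 1) {g h : ℝ → ℝ}
    (hg : ∀ x, 0 < x → g x ≤ ∑ i, g (x / r i) + h x) (hK : ∀ x, 1 ≤ x → g x ≤ K) :
    ∃ L, 0 ≤ L ∧ ∀ δ D, 0 < δ → 1 ≤ D → (∀ x ∈ Ico δ 1, h x ≤ x ^ (-t) + D) →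
      ∀ x ∈ Ico δ 1, g x ≤ L * (x ^ (-t) + D * x ^ (-σ)) := by
  obtain ⟨L, hL0, hL, hLK⟩ :
      ∃ L, 0 ≤ L ∧ 1 ≤ L * (1 - ∑ i, r i ^ σ) ∧ ∀ i, K ≤ L * r i ^ σ := by
    have hlarge {c : ℝ} (hc : 0 < c) (b : ℝ) : ∀ᶠ L in atTop, b ≤ L * c :=
      (tendsto_id.atTop_mul_const hc).eventually_ge_atTop b
    exact ((eventually_ge_atTop 0).and ((hlarge (sub_pos.2 hsum) 1).and
      (eventually_all.2 fun i ↦ hlarge (Real.rpow_pos_of_pos (hr i).1 σ) K))).exists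
  refine ⟨L, hL0, fun δ D hδ hD hh ↦ le_of_scaling_subsolution_of_supersolution hr hδ
    (fun x hx ↦ hg x (hδ.trans_le hx.1)) (fun x hx ↦ ?_) fun i x hx ↦ ?_⟩
  · exact (add_le_add_right (hh x hx) _).trans (power_supersolution hr hσ hσt
      (zero_le_one.trans hD) hL0 hL ⟨hδ.trans_le hx.1, hx.2⟩)
  · have hx0 : 0 < x := zero_lt_one.trans_le hx.1
    have hrx : r i ^ σ ≤ x ^ (-σ) := by
      rw [Real.rpow_neg hx0.le, ← Real.inv_rpow hx0.le]
      exact Real.rpow_le_rpow (hr i).1.le ((le_inv_comm₀ (hr i).1 hx0).2 hx.2.le) hσ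
    calc g x ≤ K := hK x hx.1
      _ ≤ L * r i ^ σ := hLK i
      _ ≤ L * x ^ (-σ) := by gcongr
      _ ≤ L * (x ^ (-t) + D * x ^ (-σ)) := by
        gcongr
        exact (le_mul_of_one_le_left (Real.rpow_nonneg hx0.le _) hD).trans
          (le_add_of_nonneg_left (Real.rpow_nonneg hx0.le _))

end ScalingRecursion

section InhomogeneousAttractor

variable {X : Type*} [MetricSpace X] {ι : Type*} [Fintype ι] {S : ι → X → X} {r : ι → ℝ≥0}
  {C F : Set X} {t : ℝ}

lemma lbDim_inhomogeneous_attractor_le_of_sum_rpow_lt_one (hr : ∀ i, (r i : ℝ) ∈ Ioo 0 1)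
    (hS : ∀ i, LipschitzOnWith (r i) (S i) F) (hF : TotallyBounded F)
    (hFC : F = (⋃ i, S i '' F) ∪ C) {σ q : ℝ} (hσ : 0 ≤ σ) (hσt : σ ≤ t)
    (hsum : ∑ i, (r i : ℝ) ^ σ < 1) (hbox : ∃ᶠ δ in 𝓝[>] 0, boxRatio C δ < t)
    (hq : creT C t < q) : lbDim F ≤ max t (σ + q * t) := by
  have ht : 0 ≤ t := hσ.trans hσt
  have hC : TotallyBounded C := hF.subset (subset_union_right.trans_eq hFC.symm)
  have hqt : 0 ≤ q * t := mul_nonneg ((creT_nonneg C t).trans hq.le) ht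
  obtain ⟨L, hL0, hL⟩ := exists_bound_of_scaling_recursion hr hσ hσt hsum
    (g := fun x ↦ coverN F x) (h := fun x ↦ coverN C x)
    (fun x hx ↦ mod_cast coverN_inhomogeneous_attractor_le (fun i ↦ (hr i).1) hS hF hFC hx)
    (fun x hx ↦ Nat.cast_le.2 (coverN_le_coverN hF subset_rfl one_pos hx))
  refine lbDim_le_of_frequently_coverN_le (L := L * 2) (ht.trans (le_max_left _ _))
    (((frequently_coverN_le_of_creT_lt hC ht hbox hq).and_eventually
      (Ioo_mem_nhdsGT one_pos)).mono ?_)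
  rintro δ ⟨hCδ, hδ0, hδ1⟩
  have hrpow {u : ℝ} (hu : u ≤ max t (σ + q * t)) : δ ^ (-u) ≤ δ ^ (-max t (σ + q * t)) :=
    Real.rpow_le_rpow_of_exponent_ge hδ0 hδ1.le (neg_le_neg hu)
  have hD : 1 ≤ δ ^ (-(q * t)) :=
    Real.one_le_rpow_of_pos_of_le_one_of_nonpos hδ0 hδ1.le (neg_nonpos.2 hqt)
  calc (coverN F δ : ℝ) ≤ L * (δ ^ (-t) + δ ^ (-(q * t)) * δ ^ (-σ)) :=
        hL δ _ hδ0 hD (fun x hx ↦ hCδ x hx.1) δ ⟨le_rfl, hδ1⟩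
    _ = L * (δ ^ (-t) + δ ^ (-(σ + q * t))) := by rw [← Real.rpow_add hδ0, neg_add_rev]
    _ ≤ L * (δ ^ (-max t (σ + q * t)) + δ ^ (-max t (σ + q * t))) := by
        gcongr L * (?_ + ?_)
        exacts [hrpow (le_max_left _ _), hrpow (le_max_right _ _)]
    _ = L * 2 * δ ^ (-max t (σ + q * t)) := by ring

theorem lower_box_dim_inhomogeneous_upper_bound_general (hr : ∀ i, (r i : ℝ) ∈ Ioo 0 1)
    (hS : ∀ i, LipschitzOnWith (r i) (S i) F) (hF : TotallyBounded F)
    (hFC : F = (⋃ i, S i '' F) ∪ C) {s : ℝ} (hs : ∑ i, (r i : ℝ) ^ s = 1)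
    (ht : max s (lbDim C) < t) : lbDim F ≤ max t (s + creT C t * t) := by
  obtain ⟨hst, hCt⟩ := max_lt_iff.1 ht
  have hs0 : 0 ≤ s := similarityDimension_nonneg hr hs
  have hCF : C ⊆ F := subset_union_right.trans_eq hFC.symm
  rcases frequently_boxRatio_lt_or_lbDim_eq_zero hF hCF hCt with hbox | hF0
  · have hbound : ∀ᶠ ε in 𝓝[>] 0, lbDim F ≤ max t (s + ε + (creT C t + ε) * t) := by
      filter_upwards [Ioo_mem_nhdsGT (sub_pos.2 hst)] with ε ⟨hε0, hεt⟩
      exact lbDim_inhomogeneous_attractor_le_of_sum_rpow_lt_one hr hS hF hFC (by positivity)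
        (by linarith) (sum_rpow_lt_one_of_similarityDimension_lt hr hs (by linarith)) hbox
        (by linarith)
    have hlim : Tendsto (fun ε ↦ max t (s + ε + (creT C t + ε) * t)) (𝓝[>] 0)
        (𝓝 (max t (s + creT C t * t))) := by
      refine (Continuous.tendsto' ?_ _ _ (by simp)).mono_left nhdsWithin_le_nhds
      fun_prop
    exact ge_of_tendsto hlim hbound
  · exact hF0.trans_le (le_max_of_le_left (hs0.trans hst.le))

end InhomogeneousAttractor

theorem lower_box_dim_inhomogeneous_upper_bound
    {X : Type*} [MetricSpace X] [CompactSpace X] {N : ℕ} (hN : 0 < N)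
    (S : Fin N → X → X) (r : Fin N → ℝ)
    (hr : ∀ i, r i ∈ Set.Ioo (0 : ℝ) 1)
    (hS : ∀ i x y, dist (S i x) (S i y) = r i * dist x y)
    (s : ℝ) (hs : ∑ i, r i ^ s = 1)
    (C : Set X) (hC : IsCompact C) (hCne : C.Nonempty)
    (FC : Set X) (hFCc : IsCompact FC) (hFCne : FC.Nonempty)
    (hFC : FC = (⋃ i, S i '' FC) ∪ C)
 :
    ∀ t : ℝ, max s (lbDim C) < t → lbDim FC ≤ max t (s + creT C t * t) := by
  intro t ht
  lift r to Fin N → ℝ≥0 using fun i ↦ (hr i).1.le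
  exact lower_box_dim_inhomogeneous_upper_bound_general hr
    (fun i ↦ (LipschitzWith.of_dist_le_mul fun x y ↦ (hS i x y).le).lipschitzOnWith)
    hFCc.totallyBounded hFC hs ht
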